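/- Let Z be a subset system, P and Q posets, and f : P → Q a map. Then f is σ^Z-continuous if and only if f(D^δ) ⊆ (f(D))^δ for every D ∈ Z(P); moreover, either of these equivalent conditions implies that f(cl_{σ^Z(P)}(A)) ⊆ cl_{σ^Z(Q)}(f(A)) for every A ⊆ P. -/

import Mathlib

/-!
Principal ideals `↓y` belong to `Γ^Z(Q)`, so for a continuous `f` and an upper bound `y` of `f(D)`,
the set `f⁻¹(↓y)` is in `Γ^Z(P)` and contains `D`, hence `D^δ`; that is, `f(D^δ) ⊆ f(D)^δ`.
Conversely, the cut inclusion for singletons makes `f` monotone, so `f(S) ∈ Z(Q)` for `S ∈ Z(P)`,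
and a set of `Γ^Z(Q)` containing `f(S)` contains `f(S)^δ ⊇ f(S^δ)`.
-/

open Set

/-- A subset system on the category of posets. -/
structure SubsetSystem : Type 1 where
  Z : ∀ (P : Type) [PartialOrder P], Set (Set P)
  singleton_mem : ∀ (P : Type) [PartialOrder P] (x : P), {x} ∈ Z P
  image_mem : ∀ (P : Type) [PartialOrder P] (Q : Type) [PartialOrder Q]
    (f : P → Q), Monotone f → ∀ S ∈ Z P, f '' S ∈ Z Q

/-- The cut operator `A^δ = A^{ul}`. -/
def cutOp {P : Type} [PartialOrder P] (A : Set P) : Set P :=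
  lowerBounds (upperBounds A)

/-- The down-closure `↓A`. -/
def dSet {P : Type} [PartialOrder P] (A : Set P) : Set P := {p | ∃ a ∈ A, p ≤ a}

/-- The up-closure `↑A`. -/
def uSet {P : Type} [PartialOrder P] (A : Set P) : Set P := {p | ∃ a ∈ A, a ≤ p}

/-- The subbasic open sets `σ^Z(P)`. -/
def sigmaZ (Z : SubsetSystem) (P : Type) [PartialOrder P] : Set (Set P) :=
  {U | ∀ S ∈ Z.Z P, (cutOp S ∩ U).Nonempty → (S ∩ U).Nonempty}

/-- The subbasic closed sets `Γ^Z(P)`. -/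
def GammaZ (Z : SubsetSystem) (P : Type) [PartialOrder P] : Set (Set P) :=
  {A | ∀ S ∈ Z.Z P, S ⊆ A → cutOp S ⊆ A}

/-- The closure `cl_{σ^Z(P)}(M)`. -/
def clZ (Z : SubsetSystem) {P : Type} [PartialOrder P] (M : Set P) : Set P :=
  ⋂₀ {A | A ∈ GammaZ Z P ∧ M ⊆ A}

/-- `P` is weakly meet `s_Z`-continuous. -/
def WMSZ (Z : SubsetSystem) (P : Type) [PartialOrder P] : Prop :=
  ∀ x : P, ∀ D ∈ Z.Z P, x ∈ cutOp D → x ∈ clZ Z (Set.Iic x ∩ dSet D)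

/-- `A ≪_Z B`. -/
def wayBelowZ (Z : SubsetSystem) {P : Type} [PartialOrder P] (A B : Set P) : Prop :=
  ∀ S ∈ Z.Z P, (cutOp S ∩ uSet B).Nonempty → (S ∩ uSet A).Nonempty

/-- `↟_Z x = {y : y ≪_Z x}`. -/
def ddArrow (Z : SubsetSystem) {P : Type} [PartialOrder P] (x : P) : Set P :=
  {y | wayBelowZ Z {y} {x}}

/-- `P` is weak `s_Z`-continuous. -/
def WeakSZCont (Z : SubsetSystem) (P : Type) [PartialOrder P] : Prop :=
  ∀ x : P, x ∈ cutOp (ddArrow Z x)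

/-- `P` is `s_Z`-continuous. -/
def SZCont (Z : SubsetSystem) (P : Type) [PartialOrder P] : Prop :=
  WeakSZCont Z P ∧ ∀ x : P, ∃ S ∈ Z.Z P, ddArrow Z x = dSet S

/-- `f` is `σ^Z`-continuous. -/
def SigmaZCont (Z : SubsetSystem) {P Q : Type} [PartialOrder P] [PartialOrder Q]
    (f : P → Q) : Prop :=
  ∀ A ∈ GammaZ Z Q, f ⁻¹' A ∈ GammaZ Z P

/-- The interior w.r.t. the subbasic opens `σ^Z(P)`. -/
def intZ (Z : SubsetSystem) {P : Type} [PartialOrder P] (A : Set P) : Set P :=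
  ⋃₀ {U | U ∈ sigmaZ Z P ∧ U ⊆ A}

/-- `Fin P = {↑F : F ⊆_f P}` ordered by reverse inclusion. -/
def FinP (P : Type) [PartialOrder P] : Type :=
  {A : Set P // ∃ F : Set P, F.Finite ∧ A = uSet F}

instance (P : Type) [PartialOrder P] : PartialOrder (FinP P) :=
  PartialOrder.lift (fun A => OrderDual.toDual A.1)
    (fun A B h => Subtype.ext (OrderDual.toDual.injective h))

/-- The set of minimal elements of `A`. -/
def minSet {P : Type} [PartialOrder P] (A : Set P) : Set P :=
  {x ∈ A | ∀ y ∈ A, y ≤ x → y = x}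

/-- `ω_Z(x) = {F finite : F ≪_Z x}`. -/
def omegaZ (Z : SubsetSystem) {P : Type} [PartialOrder P] (x : P) : Set (Set P) :=
  {F | F.Finite ∧ wayBelowZ Z F {x}}

/-- `P` is `s_Z`-quasicontinuous. -/
def SZQuasi (Z : SubsetSystem) (P : Type) [PartialOrder P] : Prop :=
  ∀ p : P,
    {A : FinP P | ∃ F ∈ omegaZ Z p, A.1 = uSet F} ∈ Z.Z (FinP P) ∧
    Set.Ici p = ⋂ F ∈ omegaZ Z p, uSet F

/-- `Z` has the Rudin property. -/
def RudinProp (Z : SubsetSystem) : Prop :=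
  ∀ (P : Type) [PartialOrder P], ∀ E : Set P, IsUpperSet E →
    ∀ G ∈ Z.Z (FinP P), (∀ A ∈ G, A.1 ≠ (∅ : Set P)) →
    (⋂ A ∈ G, A.1) ⊆ E →
    ∃ K : Set P,
      K ⊆ (⋃ A ∈ G, minSet A.1) ∧
      (∀ A ∈ G, (K ∩ minSet A.1).Nonempty) ∧
      K ∈ Z.Z P ∧
      (⋂ k ∈ K, Set.Ici k) ⊆ E ∧
      ∀ A ∈ G, ∀ B ∈ G, A.1 ⊆ B.1 →
        K ∩ minSet A.1 ⊆ uSet (K ∩ minSet B.1)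

/-- `Z` is union complete. -/
def UnionComplete (Z : SubsetSystem) : Prop :=
  ∀ (P : Type) [PartialOrder P], ∀ S ∈ Z.Z ↥(Z.Z P), (⋃ D ∈ S, D.1) ∈ Z.Z P

/-- `Z` has the finite family union property. -/
def FFUP (Z : SubsetSystem) : Prop :=
  ∀ (P : Type) [PartialOrder P], ∀ (n : ℕ) (S : Fin n → Set (FinP P)),
    (∀ i, S i ∈ Z.Z (FinP P)) →
    {A : FinP P | ∃ g : Fin n → FinP P, (∀ i, g i ∈ S i) ∧ A.1 = ⋃ i, (g i).1} ∈
      Z.Z (FinP P)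

/-- `Z` has property M. -/
def PropM (Z : SubsetSystem) : Prop :=
  ∀ (P : Type) [PartialOrder P], ∀ A : FinP P, {B : FinP P | A.1 ⊆ B.1} ∈ Z.Z (FinP P)

/-- The lower topology `ω(P)`, generated by the complements of principal filters. -/
def lowerTop (P : Type) [PartialOrder P] : TopologicalSpace P :=
  TopologicalSpace.generateFrom {s | ∃ a : P, s = (Set.Ici a)ᶜ}

/-- The relative cut `E^δ|_A`. -/
def cutIn {P : Type} [PartialOrder P] (E A : Set P) : Set P :=
  {p ∈ A | ∀ m ∈ upperBounds E ∩ A, p ≤ m}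

/-- `Z` is subset hereditary. -/
def SubsetHered (Z : SubsetSystem) : Prop :=
  ∀ (P : Type) [PartialOrder P] (Q : Type) [PartialOrder Q] (f : P → Q),
    (∀ x y : P, f x ≤ f y ↔ x ≤ y) → ∀ D : Set P, (D ∈ Z.Z P ↔ f '' D ∈ Z.Z Q)

/-- The `Z`-Scott topology on `P` is lower hereditary. -/
def LowerHered (Z : SubsetSystem) (P : Type) [PartialOrder P] : Prop :=
  ∀ A ∈ GammaZ Z P,
    GammaZ Z ↥A = {C : Set ↥A | ∃ B ∈ GammaZ Z P, C = Subtype.val ⁻¹' B}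

/-- `x ≺_Z y` (the `Z`-beneath relation). -/
def beneathZ (Z : SubsetSystem) {P : Type} [PartialOrder P] (x y : P) : Prop :=
  ∀ A ∈ GammaZ Z P, y ∈ cutOp A → x ∈ A

/-- `P` is `δ_Z`-continuous. -/
def DeltaZCont (Z : SubsetSystem) (P : Type) [PartialOrder P] : Prop :=
  ∀ a : P, a ∈ cutOp {m | beneathZ Z m a}

/-- `k_Z(L)`: the set of `Z`-compact elements. -/
def kZ (Z : SubsetSystem) (L : Type) [PartialOrder L] : Set L :=
  {x | beneathZ Z x x}

lemma Iic_mem_GammaZ (Z : SubsetSystem) {Q : Type} [PartialOrder Q] (y : Q) :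
    Set.Iic y ∈ GammaZ Z Q :=
  fun _ _ hS _ hx => hx fun _ hs => hS hs

/-- `{x}^δ` is the principal ideal of `x`, so preserving cuts of singletons forces monotonicity. -/
lemma monotone_of_image_cutOp (Z : SubsetSystem) {P Q : Type} [PartialOrder P] [PartialOrder Q]
    {f : P → Q} (h : ∀ D ∈ Z.Z P, f '' cutOp D ⊆ cutOp (f '' D)) : Monotone f := by
  intro a b hab
  have ha : a ∈ cutOp ({b} : Set P) := fun u hu => hab.trans (hu rfl)
  apply h {b} (Z.singleton_mem P b) ⟨a, ha, rfl⟩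
  rintro _ ⟨x, rfl, rfl⟩
  exact le_rfl

/-- `f` is `σ^Z`-continuous iff `f(D^δ) ⊆ (f(D))^δ` for all `D ∈ Z(P)`;
and either condition implies `f(cl_{σ^Z(P)}(A)) ⊆ cl_{σ^Z(Q)}(f(A))` for all `A ⊆ P`. -/
theorem stmt7 (Z : SubsetSystem) (P Q : Type) [PartialOrder P] [PartialOrder Q]
    (f : P → Q) :
    (SigmaZCont Z f ↔ ∀ D ∈ Z.Z P, f '' cutOp D ⊆ cutOp (f '' D)) ∧
    (SigmaZCont Z f → ∀ A : Set P, f '' clZ Z A ⊆ clZ Z (f '' A)) := by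
  refine ⟨⟨?_, ?_⟩, ?_⟩
  · rintro hf D hD _ ⟨x, hx, rfl⟩ y hy
    exact hf _ (Iic_mem_GammaZ Z y) D hD (fun d hd => hy ⟨d, hd, rfl⟩) hx
  · intro h A hA S hS hSA x hx
    exact hA _ (Z.image_mem P Q f (monotone_of_image_cutOp Z h) S hS)
      (Set.image_subset_iff.2 hSA) (h S hS ⟨x, hx, rfl⟩)
  · rintro hf A _ ⟨x, hx, rfl⟩ B ⟨hB, hAB⟩
    exact hx _ ⟨hf B hB, Set.image_subset_iff.1 hAB⟩
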